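/- Let A be a left strongly Arens irregular Banach algebra, i.e. the first topological center Z₁(A**) = {a″ ∈ A** : b″ ↦ a″b″ is weak*-to-weak* continuous on A**} equals A (canonically embedded in A**). If A** with the first Arens product is an amenable Banach algebra, then A has an identity element. -/

import Mathlib

/-!
Write `C = A**` with the first Arens product.

* Let `C` act on `A*` by `(c, a') ↦ c·a'` on the left and by zero on the right. Then the identity
  map `C → A** = (A*)*` is a derivation, and innerness yields a left identity `E` of `C`.
* Left multiplication by `E` is the identity, hence weak*-continuous, so `E ∈ Z₁(A**) = A`.
* Let `C` act on `C*` by `⟨w·c, x⟩ = ⟨w, c x⟩` on the right and by zero on the left. Then the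
  canonical embedding `C → C**` is a derivation, and innerness yields `F ∈ C**` with
  `⟨w, c⟩ = ⟨F, w·c⟩` for all `w`, `c`. Since `w·E = w`, taking `c = E` gives `F = E`, whence
  `⟨w, c⟩ = ⟨w·c, E⟩ = ⟨w, c E⟩`, i.e. `E` is also a right identity of `C`.
-/

noncomputable section

open ContinuousLinearMap Filter Topology Metric

/-- The topological dual of a real normed space. -/
abbrev Dl (E : Type) [NormedAddCommGroup E] [NormedSpace ℝ E] : Type := E →L[ℝ] ℝ

/-- The bidual of a real normed space. -/
abbrev Bidual (E : Type) [NormedAddCommGroup E] [NormedSpace ℝ E] : Type := Dl (Dl E)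

section Defs

variable {E F G W : Type}
variable [NormedAddCommGroup E] [NormedSpace ℝ E] [NormedAddCommGroup F] [NormedSpace ℝ F]
  [NormedAddCommGroup G] [NormedSpace ℝ G] [NormedAddCommGroup W] [NormedSpace ℝ W]

/-- The first adjoint `m*` of a bounded bilinear map `m`, defined by
`⟨m*(z',x), y⟩ = ⟨z', m(x,y)⟩`. -/
def adj (m : E →L[ℝ] F →L[ℝ] G) : Dl G →L[ℝ] E →L[ℝ] Dl F :=
  ((ContinuousLinearMap.compL ℝ E (F →L[ℝ] G) (Dl F)).flip m).comp
    (ContinuousLinearMap.compL ℝ F G ℝ)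

/-- The (first) Arens triple adjoint `m*** = (m*)**` of a bounded bilinear map `m`;
for `m` the multiplication of a Banach algebra this is the first Arens product. -/
def arens3 (m : E →L[ℝ] F →L[ℝ] G) : Bidual E →L[ℝ] Bidual F →L[ℝ] Bidual G :=
  adj (adj (adj m))

/-- The canonical embedding of a normed space into its bidual. -/
def inclBidual (E : Type) [NormedAddCommGroup E] [NormedSpace ℝ E] : E →L[ℝ] Bidual E :=
  (ContinuousLinearMap.id ℝ (Dl E)).flip

/-- The dual (adjoint) map of a continuous linear map. -/
def dmap (T : E →L[ℝ] F) : Dl F →L[ℝ] Dl E := (ContinuousLinearMap.compL ℝ E F ℝ).flip T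

/-- The second adjoint `T″ : E** → F**` of a continuous linear map `T : E → F`. -/
def bidualMap (T : E →L[ℝ] F) : Bidual E →L[ℝ] Bidual F := dmap (dmap T)

/-- Given a (left or right) module action `act : C →L W →L W`, the induced action
on the dual `W*`, `(dualActL act) c f = f ∘ (act c)`.  If `act` is the right action
`w ↦ w·c` this is the left action `⟨c·f, w⟩ = ⟨f, w·c⟩` on `W*`; if `act` is the left
action it is the right action on `W*`. -/
def dualActL (act : E →L[ℝ] W →L[ℝ] W) : E →L[ℝ] Dl W →L[ℝ] Dl W :=
  ((ContinuousLinearMap.compL ℝ W W ℝ).flip).comp act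

@[simp] theorem dualActL_apply (act : E →L[ℝ] W →L[ℝ] W) (c : E) (f : Dl W) (w : W) :
    dualActL act c f w = f (act c w) := rfl

/-- `D : C → W` is a derivation with respect to the multiplication `mul` on `C` and the
left action `l` and right action `r` (with `r c w = w·c`) of `C` on `W`. -/
def IsDerivation (mul : E →L[ℝ] E →L[ℝ] E) (l r : E →L[ℝ] W →L[ℝ] W) (D : E →L[ℝ] W) : Prop :=
  ∀ a b : E, D (mul a b) = l a (D b) + r b (D a)

/-- `D` is an inner derivation: `D c = c·w - w·c` for some `w`. -/
def IsInner (l r : E →L[ℝ] W →L[ℝ] W) (D : E →L[ℝ] W) : Prop :=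
  ∃ w : W, ∀ a : E, D a = l a w - r a w

/-- `H¹(C, W) = 0`: every continuous derivation is inner. -/
def H1Zero (mul : E →L[ℝ] E →L[ℝ] E) (l r : E →L[ℝ] W →L[ℝ] W) : Prop :=
  ∀ D : E →L[ℝ] W, IsDerivation mul l r D → IsInner l r D

/-- The axioms making `(l, r)` a bimodule structure over `(C, mul)`
(with the convention `l c w = c·w`, `r c w = w·c`). -/
def IsBimodule (mul : E →L[ℝ] E →L[ℝ] E) (l r : E →L[ℝ] W →L[ℝ] W) : Prop :=
  (∀ a b w, l (mul a b) w = l a (l b w)) ∧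
  (∀ a b w, r (mul a b) w = r b (r a w)) ∧
  (∀ a b w, r b (l a w) = l a (r b w))

/-- A map between dual spaces is weak*-to-weak* continuous. -/
def WStarCont (f : Dl E → Dl F) : Prop :=
  Continuous (show WeakDual ℝ E → WeakDual ℝ F from f)

/-- A map from a dual space to a normed space is weak*-to-weak continuous. -/
def WStarWeakCont (f : Dl E → F) : Prop :=
  Continuous (show WeakDual ℝ E → WeakSpace ℝ F from f)

/-- A continuous linear operator is weakly compact: the closure of the image of the
closed unit ball is compact in the weak topology. -/
def WeaklyCompactOp (T : E →L[ℝ] F) : Prop :=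
  IsCompact (@closure (WeakSpace ℝ F) inferInstance (T '' Metric.closedBall 0 1))

end Defs

/-- A Banach bimodule over `(A, mul)`: a complete normed space together with bounded
bilinear left/right actions (`r a w = w·a`) satisfying the bimodule axioms. -/
structure BBimod (A : Type) [NormedAddCommGroup A] [NormedSpace ℝ A]
    (mul : A →L[ℝ] A →L[ℝ] A) : Type 1 where
  W : Type
  [Wg : NormedAddCommGroup W]
  [Wm : NormedSpace ℝ W]
  [Wc : CompleteSpace W]
  l : A →L[ℝ] W →L[ℝ] W
  r : A →L[ℝ] W →L[ℝ] W
  isBBimod : IsBimodule mul l r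

attribute [instance] BBimod.Wg BBimod.Wm BBimod.Wc

variable {A : Type} [NormedAddCommGroup A] [NormedSpace ℝ A] {mul : A →L[ℝ] A →L[ℝ] A}

/-- The dual of a Banach `A`-bimodule, with actions `⟨a·f, w⟩ = ⟨f, w·a⟩` and
`⟨f·a, w⟩ = ⟨f, a·w⟩`. -/
def BBimod.dual (M : BBimod A mul) : BBimod A mul where
  W := Dl M.W
  l := dualActL M.r
  r := dualActL M.l
  isBBimod := by
    obtain ⟨h1, h2, h3⟩ := M.isBBimod
    refine ⟨fun a b f => ?_, fun a b f => ?_, fun a b f => ?_⟩ <;> ext w <;>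
      simp [dualActL, h1, h2, h3]

/-- The iterated dual `B^(n)` of a Banach `A`-bimodule `B`. -/
def BBimod.iterDual (M : BBimod A mul) : ℕ → BBimod A mul
  | 0 => M
  | n + 1 => (M.iterDual n).dual

/-- A pair consisting of a normed algebra-like space `(C, mul)` and a module `(W, l, r)`
over it, each equipped with a distinguished topology (the weak topology at the base
level, the weak* topology after taking biduals). -/
structure ModPair : Type 1 where
  C : Type
  [Cg : NormedAddCommGroup C]
  [Cm : NormedSpace ℝ C]
  W : Type
  [Wg : NormedAddCommGroup W]
  [Wm : NormedSpace ℝ W]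
  mul : C →L[ℝ] C →L[ℝ] C
  l : C →L[ℝ] W →L[ℝ] W
  r : C →L[ℝ] W →L[ℝ] W
  tC : TopologicalSpace C
  tW : TopologicalSpace W

attribute [instance] ModPair.Cg ModPair.Cm ModPair.Wg ModPair.Wm

/-- The bidual step: `C**` gets the first Arens product, `W**` the triple-adjoint
module actions `π_ℓ***`, `π_r***`, and both carry their weak* topologies. -/
def ModPair.bidual (P : ModPair) : ModPair where
  C := Bidual P.C
  tC := (inferInstance : TopologicalSpace (WeakDual ℝ (Dl P.C)))
  W := Bidual P.W
  tW := (inferInstance : TopologicalSpace (WeakDual ℝ (Dl P.W)))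
  mul := arens3 P.mul
  l := arens3 P.l
  r := (arens3 P.r.flip).flip

/-- The `n`-fold bidual pair: `A^(2n)` acting on `B^(2n)`. -/
def ModPair.iter (P : ModPair) : ℕ → ModPair
  | 0 => P
  | n + 1 => (P.iter n).bidual

/-- The canonical embedding `C → C^(2n)`. -/
def ModPair.inclC (P : ModPair) : (n : ℕ) → P.C →L[ℝ] (P.iter n).C
  | 0 => ContinuousLinearMap.id ℝ P.C
  | n + 1 => (inclBidual (P.iter n).C).comp (P.inclC n)

/-- The base pair of a Banach algebra `A` and a Banach `A`-bimodule, with the weak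
topologies as distinguished topologies. -/
def basePair (A : Type) [NonUnitalNormedRing A] [NormedSpace ℝ A]
    [IsScalarTower ℝ A A] [SMulCommClass ℝ A A]
    (M : BBimod A (ContinuousLinearMap.mul ℝ A)) : ModPair where
  C := A
  tC := (inferInstance : TopologicalSpace (WeakSpace ℝ A))
  W := M.W
  tW := (inferInstance : TopologicalSpace (WeakSpace ℝ M.W))
  mul := ContinuousLinearMap.mul ℝ A
  l := M.l
  r := M.r

/-- The set of products of `k` elements of `A` (by convention all of `A` when `k = 0`). -/
def iteratedProds (A : Type) [Mul A] : ℕ → Set A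
  | 0 => Set.univ
  | 1 => Set.univ
  | k + 2 => {x | ∃ y ∈ iteratedProds A (k + 1), ∃ a : A, x = y * a}

/-- `A` has a bounded left approximate identity: a bounded net `(e_i)` with
`e_i * a → a` for every `a`. -/
def HasBLAI (A : Type) [NonUnitalNormedRing A] : Prop :=
  ∃ (ι : Type) (p : Preorder ι), Nonempty ι ∧ IsDirected ι p.toLE.le ∧
    ∃ (e : ι → A) (C : ℝ), (∀ i, ‖e i‖ ≤ C) ∧
      ∀ a : A, Filter.Tendsto (fun i => e i * a) (@Filter.atTop ι p) (𝓝 a)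


theorem inclBidual_injective (E : Type) [NormedAddCommGroup E] [NormedSpace ℝ E] :
    Function.Injective (inclBidual E) := by
  intro x y h
  refine SeparatingDual.eq_iff_forall_dual_eq (R := ℝ) |>.2 fun g => ?_
  exact DFunLike.congr_fun h g

section Helpers

variable {A : Type} [NonUnitalNormedRing A] [NormedSpace ℝ A]
  [IsScalarTower ℝ A A] [SMulCommClass ℝ A A]

/-- The map `(b'', a') ↦ b''·a'` is a left action of `(A**, first Arens product)` on `A*`. -/
theorem arens_left_action (a b : Bidual A) (f : Dl A) :
    adj (adj (ContinuousLinearMap.mul ℝ A)) (arens3 (ContinuousLinearMap.mul ℝ A) a b) f =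
      adj (adj (ContinuousLinearMap.mul ℝ A)) a (adj (adj (ContinuousLinearMap.mul ℝ A)) b f) := by
  ext x
  change a (adj (adj (ContinuousLinearMap.mul ℝ A)) b (adj (ContinuousLinearMap.mul ℝ A) f x)) =
    a (adj (ContinuousLinearMap.mul ℝ A) (adj (adj (ContinuousLinearMap.mul ℝ A)) b f) x)
  congr 1
  ext y
  change b (adj (ContinuousLinearMap.mul ℝ A) (adj (ContinuousLinearMap.mul ℝ A) f x) y) =
    b (adj (ContinuousLinearMap.mul ℝ A) f (x * y))
  congr 1
  ext z
  change f (x * (y * z)) = f (x * y * z)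
  rw [mul_assoc]

theorem arens_assoc (a b c : Bidual A) :
    arens3 (ContinuousLinearMap.mul ℝ A) (arens3 (ContinuousLinearMap.mul ℝ A) a b) c =
      arens3 (ContinuousLinearMap.mul ℝ A) a (arens3 (ContinuousLinearMap.mul ℝ A) b c) := by
  ext f
  change a (adj (adj (ContinuousLinearMap.mul ℝ A)) b
      (adj (adj (ContinuousLinearMap.mul ℝ A)) c f)) =
    a (adj (adj (ContinuousLinearMap.mul ℝ A)) (arens3 (ContinuousLinearMap.mul ℝ A) b c) f)
  rw [arens_left_action]

theorem arens3_incl (a b : A) :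
    arens3 (ContinuousLinearMap.mul ℝ A) (inclBidual A a) (inclBidual A b) =
      inclBidual A (a * b) := rfl

end Helpers

/-- **Theorem 2-34 (1).** If `A` is left strongly Arens irregular (`Z₁(A**) = A`) and
`A**` is amenable, then `A` has an identity. -/
theorem stmt18 {A : Type} [NonUnitalNormedRing A] [NormedSpace ℝ A]
    [IsScalarTower ℝ A A] [SMulCommClass ℝ A A] [CompleteSpace A]
    (hsai : {a'' : Bidual A |
        WStarCont (E := Dl A) (F := Dl A)
          (fun b'' => arens3 (ContinuousLinearMap.mul ℝ A) a'' b'')} =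
      Set.range (inclBidual A))
    (hamen : ∀ (W : Type) [NormedAddCommGroup W] [NormedSpace ℝ W] [CompleteSpace W]
      (l r : Bidual A →L[ℝ] W →L[ℝ] W),
      IsBimodule (arens3 (ContinuousLinearMap.mul ℝ A)) l r →
      H1Zero (arens3 (ContinuousLinearMap.mul ℝ A)) (dualActL r) (dualActL l)) :
    ∃ e : A, ∀ a : A, e * a = a ∧ a * e = a := by
  -- the derivation `id : A** → (A*)*` gives a left identity
  obtain ⟨w, hw⟩ := hamen (Dl A) (adj (adj (ContinuousLinearMap.mul ℝ A))) 0
    ⟨arens_left_action, fun _ _ _ => rfl, fun _ _ _ => by simp⟩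
    (ContinuousLinearMap.id ℝ (Bidual A)) (by
      intro a b
      ext f
      change arens3 (ContinuousLinearMap.mul ℝ A) a b f =
        b 0 + arens3 (ContinuousLinearMap.mul ℝ A) a b f
      simp)
  have hleft : ∀ b, arens3 (ContinuousLinearMap.mul ℝ A) (-w) b = b := by
    intro b
    ext f
    have h : b f = w 0 - w (adj (adj (ContinuousLinearMap.mul ℝ A)) b f) :=
      DFunLike.congr_fun (hw b) f
    change -(w (adj (adj (ContinuousLinearMap.mul ℝ A)) b f)) = b f
    rw [h, map_zero, zero_sub]
  -- `-w` lies in the topological center, hence in `A`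
  have hmem : -w ∈ Set.range (inclBidual A) := by
    rw [← hsai]
    change WStarCont (E := Dl A) (F := Dl A)
      (fun b'' => arens3 (ContinuousLinearMap.mul ℝ A) (-w) b'')
    simp only [hleft]
    exact continuous_id
  obtain ⟨e, he⟩ := hmem
  rw [← he] at hleft
  -- the derivation `A** → (A**)**` gives a virtual right identity `F`
  obtain ⟨F, hF⟩ := hamen (Dl (Bidual A)) 0
    (adj (arens3 (ContinuousLinearMap.mul ℝ A))).flip
    ⟨fun _ _ _ => rfl, by
      intro a b g
      ext x
      exact congrArg g (arens_assoc a b x), fun _ _ _ => by simp⟩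
    (inclBidual (Bidual A)) (by
      intro a b
      ext g
      change g (arens3 (ContinuousLinearMap.mul ℝ A) a b) =
        g (arens3 (ContinuousLinearMap.mul ℝ A) a b) + inclBidual (Bidual A) a 0
      simp)
  have hF' : ∀ (a : Bidual A) (g : Dl (Bidual A)),
      g a = F (adj (arens3 (ContinuousLinearMap.mul ℝ A)) g a) := by
    intro a g
    have h : g a = F (adj (arens3 (ContinuousLinearMap.mul ℝ A)) g a) - F 0 :=
      DFunLike.congr_fun (hF a) g
    rwa [map_zero, sub_zero] at h
  have hFe : ∀ g : Dl (Bidual A), F g = g (inclBidual A e) := by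
    intro g
    rw [hF' (inclBidual A e) g]
    congr 1
    ext x
    exact (congrArg g (hleft x)).symm
  have hright : ∀ a, arens3 (ContinuousLinearMap.mul ℝ A) a (inclBidual A e) = a := by
    intro a
    refine SeparatingDual.eq_iff_forall_dual_eq (R := ℝ) |>.2 fun g => ?_
    have h := hF' a g
    rw [hFe] at h
    exact h.symm
  refine ⟨e, fun a => ⟨inclBidual_injective A ?_, inclBidual_injective A ?_⟩⟩
  · rw [← arens3_incl, hleft]
  · rw [← arens3_incl, hright]


end
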